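/- arXiv:1401.7702 — 3 statements merged into one kernel-verified Lean document; each statement's English description precedes it below -/
import Mathlib

section
/- Let n be a positive integer and S ⊆ Fin n. Let B be a symmetric real n×n matrix, and let Â be a symmetric real n×n matrix with nonnegative entries such that Â_{ij} = 0 unless both i ∈ S and j ∈ S. Assume ‖Â‖ > ‖B_N‖ + ‖B_S‖. Let λ be the largest eigenvalue of B + Â and let u be a unit (ℓ²-norm one) eigenvector of B + Â with eigenvalue λ. Let u_S be the vector agreeing with u on coordinates in S and zero elsewhere, and set δ = ‖u_S‖₂². Define α = ‖Â‖ + ‖B_S‖ − ‖B_N‖, β = 2‖B_{SN}‖, and γ = ‖B_N‖ + ‖B_S‖ − ‖Â‖. Then δ ≥ ( β² − 2αγ − √( β⁴ − 4β²γ(α+γ) ) ) / ( 2(α² + β²) ). -/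
/-- The spectral norm (ℓ² operator norm) of a real matrix. -/
noncomputable def specNorm {m n : Type*} [Fintype m] [Fintype n] [DecidableEq n]
    (M : Matrix m n ℝ) : ℝ :=
  ‖LinearMap.toContinuousLinearMap (Matrix.toEuclideanLin M)‖

/-- The principal submatrix of `B` on the rows and columns in `S`. -/
def blockS {n : ℕ} (S : Finset (Fin n)) (B : Matrix (Fin n) (Fin n) ℝ) :
    Matrix {i : Fin n // i ∈ S} {i : Fin n // i ∈ S} ℝ :=
  B.submatrix Subtype.val Subtype.val

/-- The principal submatrix of `B` on the rows and columns in the complement of `S`. -/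
def blockN {n : ℕ} (S : Finset (Fin n)) (B : Matrix (Fin n) (Fin n) ℝ) :
    Matrix {i : Fin n // i ∉ S} {i : Fin n // i ∉ S} ℝ :=
  B.submatrix Subtype.val Subtype.val

/-- The off-diagonal block of `B` with rows in `S` and columns in the complement. -/
def blockSN {n : ℕ} (S : Finset (Fin n)) (B : Matrix (Fin n) (Fin n) ℝ) :
    Matrix {i : Fin n // i ∈ S} {i : Fin n // i ∉ S} ℝ :=
  B.submatrix Subtype.val Subtype.val

/-!
Write `x_S` and `x_N` for the parts of `x` on `S` and on its complement. An entrywise nonnegative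
Hermitian matrix attains its norm as a value `xᴴ Â x` at a unit vector `x`: take entrywise moduli in
an eigenvector whose eigenvalue is `±‖Â‖`. Since `Â` does not see the coordinates outside `S`,
testing the maximality of `λ` on the part of `x` on `S` gives `‖Â‖ - ‖B_S‖ ≤ λ`. On the other hand,
expanding `λ = uᴴ (B + Â) u` in blocks gives
`λ ≤ (‖Â‖ + ‖B_S‖) ‖u_S‖² + 2 ‖B_SN‖ ‖u_S‖ ‖u_N‖ + ‖B_N‖ ‖u_N‖²`. With `‖u_N‖² = 1 - δ` the two
bounds combine to `-γ ≤ α δ + β √(δ (1 - δ))`, a quadratic inequality for `δ`.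
-/

section LowerRoot

/-- The smaller root `d` of `(α d + γ)² = β² d (1 - d)`. It is the least value of `‖u_S‖²` allowed
by the inequality `-γ ≤ α ‖u_S‖² + β ‖u_S‖ ‖u_N‖` for a unit vector `u`. -/
noncomputable def lowerRoot (α β γ : ℝ) : ℝ :=
  (β ^ 2 - 2 * α * γ - √(β ^ 4 - 4 * β ^ 2 * γ * (α + γ))) / (2 * (α ^ 2 + β ^ 2))

variable {α β γ : ℝ}

theorem lowerRoot_le_of_sq_le {d : ℝ} (hpos : 0 < α ^ 2 + β ^ 2)
    (h : (α * d + γ) ^ 2 ≤ β ^ 2 * (d * (1 - d))) : lowerRoot α β γ ≤ d := by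
  have hdisc : (β ^ 2 - 2 * α * γ - d * (2 * (α ^ 2 + β ^ 2))) ^ 2 ≤
      β ^ 4 - 4 * β ^ 2 * γ * (α + γ) := by
    linear_combination 4 * (α ^ 2 + β ^ 2) * h
  rw [lowerRoot, div_le_iff₀ (by positivity)]
  linarith [Real.le_sqrt_of_sq_le hdisc]

theorem lowerRoot_le_sq {s t : ℝ} (hα : 0 < α) (hγ : γ ≤ 0) (hαγ : 0 ≤ α + γ)
    (hst : s ^ 2 + t ^ 2 = 1) (h : -γ ≤ α * s ^ 2 + β * (s * t)) : lowerRoot α β γ ≤ s ^ 2 := by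
  have hpos : 0 < α ^ 2 + β ^ 2 := by positivity
  rcases le_total 0 (α * s ^ 2 + γ) with hs | hs
  · have hzero : α * (-γ / α) + γ = 0 := by rw [mul_div_cancel₀ _ hα.ne', neg_add_cancel]
    have hle_one : -γ / α ≤ 1 := (div_le_one₀ hα).2 (by linarith)
    calc lowerRoot α β γ
      _ ≤ -γ / α := by
        refine lowerRoot_le_of_sq_le hpos ?_
        rw [hzero, zero_pow two_ne_zero]
        exact mul_nonneg (sq_nonneg β)
          (mul_nonneg (div_nonneg (by linarith) hα.le) (sub_nonneg.2 hle_one))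
      _ ≤ s ^ 2 := (div_le_iff₀' hα).2 (by linarith)
  · refine lowerRoot_le_of_sq_le hpos ?_
    calc (α * s ^ 2 + γ) ^ 2
      _ = (-(α * s ^ 2 + γ)) ^ 2 := (neg_sq _).symm
      _ ≤ (β * (s * t)) ^ 2 := pow_le_pow_left₀ (by linarith) (by linarith) 2
      _ = β ^ 2 * (s ^ 2 * (1 - s ^ 2)) := by rw [← hst]; ring

end LowerRoot

section QuadraticForm

open Matrix WithLp
open scoped Matrix.Norms.L2Operator ComplexOrder

variable {𝕜 ι κ : Type*} [RCLike 𝕜] [Fintype ι] [Fintype κ]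

theorem norm_star_dotProduct_mulVec_le [DecidableEq κ] (M : Matrix ι κ 𝕜)
    (x : EuclideanSpace 𝕜 ι) (y : EuclideanSpace 𝕜 κ) :
    ‖star x.ofLp ⬝ᵥ M *ᵥ y.ofLp‖ ≤ ‖M‖ * ‖x‖ * ‖y‖ := by
  have hinner : star x.ofLp ⬝ᵥ M *ᵥ y.ofLp = inner 𝕜 x (toLp 2 (M *ᵥ y.ofLp)) := by
    rw [EuclideanSpace.inner_eq_star_dotProduct, dotProduct_comm]
  calc ‖star x.ofLp ⬝ᵥ M *ᵥ y.ofLp‖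
    _ ≤ ‖x‖ * ‖toLp 2 (M *ᵥ y.ofLp)‖ := hinner ▸ norm_inner_le_norm _ _
    _ ≤ ‖x‖ * (‖M‖ * ‖y‖) := by gcongr; exact l2_opNorm_mulVec M y
    _ = ‖M‖ * ‖x‖ * ‖y‖ := by ring

/-- The value `xᴴ M x` of the quadratic form of `M`; for a Hermitian matrix it is real, and taking
the real part makes it a real number for every `M`. -/
noncomputable def quadForm (M : Matrix ι ι 𝕜) (x : EuclideanSpace 𝕜 ι) : ℝ :=
  RCLike.re (star x.ofLp ⬝ᵥ M *ᵥ x.ofLp)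

theorem quadForm_zero_right (M : Matrix ι ι 𝕜) : quadForm M 0 = 0 := by
  simp [quadForm]

theorem quadForm_add_left (M N : Matrix ι ι 𝕜) (x : EuclideanSpace 𝕜 ι) :
    quadForm (M + N) x = quadForm M x + quadForm N x := by
  simp only [quadForm, add_mulVec, dotProduct_add, map_add]

theorem quadForm_eq_of_mulVec_eq_smul {M : Matrix ι ι 𝕜} {μ : ℝ} {x : EuclideanSpace 𝕜 ι}
    (h : M *ᵥ x.ofLp = μ • x.ofLp) : quadForm M x = μ * ‖x‖ ^ 2 := by
  have hself : RCLike.re (star x.ofLp ⬝ᵥ x.ofLp) = ‖x‖ ^ 2 := by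
    rw [dotProduct_comm, ← EuclideanSpace.inner_eq_star_dotProduct, inner_self_eq_norm_sq]
  rw [quadForm, h, dotProduct_smul, RCLike.smul_re, hself]

theorem abs_quadForm_le_quadForm_norm {M : Matrix ι ι 𝕜} (hM : ∀ i j, 0 ≤ M i j)
    (x : EuclideanSpace 𝕜 ι) : |quadForm M x| ≤ quadForm M (toLp 2 fun i => (‖x i‖ : 𝕜)) := by
  have hmodulus : quadForm M (toLp 2 fun i => (‖x i‖ : 𝕜)) =
      ∑ i, ∑ j, ‖x i‖ * (‖M i j‖ * ‖x j‖) := by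
    simp only [quadForm, dotProduct, mulVec, Finset.mul_sum, map_sum]
    refine Finset.sum_congr rfl fun i _ => Finset.sum_congr rfl fun j _ => ?_
    rw [← RCLike.norm_of_nonneg' (hM i j)]
    simp
  calc |quadForm M x|
    _ ≤ ‖∑ i, ∑ j, star (x i) * (M i j * x j)‖ := by
      simpa only [quadForm, dotProduct, mulVec, Finset.mul_sum, Pi.star_apply] using
        RCLike.abs_re_le_norm _
    _ ≤ ∑ i, ∑ j, ‖star (x i) * (M i j * x j)‖ :=
      norm_sum_le_of_le _ fun i _ => norm_sum_le _ _
    _ = quadForm M (toLp 2 fun i => (‖x i‖ : 𝕜)) := by simp only [hmodulus, norm_mul, norm_star]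

variable [DecidableEq ι]

theorem abs_quadForm_le (M : Matrix ι ι 𝕜) (x : EuclideanSpace 𝕜 ι) :
    |quadForm M x| ≤ ‖M‖ * ‖x‖ ^ 2 :=
  calc |quadForm M x|
    _ ≤ ‖star x.ofLp ⬝ᵥ M *ᵥ x.ofLp‖ := RCLike.abs_re_le_norm _
    _ ≤ ‖M‖ * ‖x‖ * ‖x‖ := norm_star_dotProduct_mulVec_le M x x
    _ = ‖M‖ * ‖x‖ ^ 2 := by ring

open scoped MatrixOrder in
theorem quadForm_le_of_eigenvalues_le {M : Matrix ι ι 𝕜} (hM : M.IsHermitian) {c : ℝ}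
    (h : ∀ i, hM.eigenvalues i ≤ c) (x : EuclideanSpace 𝕜 ι) : quadForm M x ≤ c * ‖x‖ ^ 2 := by
  have hspec : ∀ μ ∈ spectrum ℝ M, μ ≤ c := by
    rwa [hM.spectrum_real_eq_range_eigenvalues, Set.forall_mem_range]
  have hpos : (algebraMap ℝ (Matrix ι ι 𝕜) c - M).PosSemidef :=
    le_iff.mp (le_algebraMap_of_spectrum_le hspec hM.isSelfAdjoint)
  have hscalar : quadForm (algebraMap ℝ (Matrix ι ι 𝕜) c) x = c * ‖x‖ ^ 2 :=
    quadForm_eq_of_mulVec_eq_smul <| by rw [Algebra.algebraMap_eq_smul_one, smul_mulVec, one_mulVec]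
  calc quadForm M x
    _ ≤ quadForm M x + quadForm (algebraMap ℝ (Matrix ι ι 𝕜) c - M) x :=
      le_add_of_nonneg_right (hpos.re_dotProduct_nonneg x.ofLp)
    _ = c * ‖x‖ ^ 2 := by rw [← quadForm_add_left, add_sub_cancel, hscalar]

theorem norm_eq_norm_eigenvalues {M : Matrix ι ι 𝕜} (hM : M.IsHermitian) :
    ‖M‖ = ‖hM.eigenvalues‖ := by
  conv_lhs => rw [hM.spectral_theorem]
  rw [Unitary.conjStarAlgAut_apply, ← Unitary.coe_star, CStarRing.norm_mul_coe_unitary,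
    CStarRing.norm_coe_unitary_mul, l2_opNorm_diagonal]
  simp [Pi.norm_def]

theorem exists_abs_quadForm_eq_norm [Nonempty ι] {M : Matrix ι ι 𝕜} (hM : M.IsHermitian) :
    ∃ x : EuclideanSpace 𝕜 ι, ‖x‖ = 1 ∧ |quadForm M x| = ‖M‖ := by
  obtain ⟨i, hi : ‖hM.eigenvalues i‖ = ‖hM.eigenvalues‖⟩ := (IsGreatest.pi_norm hM.eigenvalues).1
  refine ⟨hM.eigenvectorBasis i, hM.eigenvectorBasis.norm_eq_one i, ?_⟩
  rw [norm_eq_norm_eigenvalues hM, ← hi, Real.norm_eq_abs, hM.eigenvalues_eq, quadForm]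

theorem exists_quadForm_eq_norm [Nonempty ι] {M : Matrix ι ι 𝕜} (hM : M.IsHermitian)
    (hnonneg : ∀ i j, 0 ≤ M i j) :
    ∃ x : EuclideanSpace 𝕜 ι, ‖x‖ = 1 ∧ quadForm M x = ‖M‖ := by
  obtain ⟨y, hy, hMy⟩ := exists_abs_quadForm_eq_norm hM
  let x : EuclideanSpace 𝕜 ι := toLp 2 fun i => (‖y i‖ : 𝕜)
  have hx : ‖x‖ = 1 := by
    rw [← hy]
    simp [x, EuclideanSpace.norm_eq]
  have hle : quadForm M x ≤ ‖M‖ := by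
    simpa only [hx, one_pow, mul_one] using (le_abs_self _).trans (abs_quadForm_le M x)
  exact ⟨x, hx, hle.antisymm (hMy ▸ abs_quadForm_le_quadForm_norm hnonneg y)⟩

end QuadraticForm

section Blocks

open Matrix WithLp
open scoped Matrix.Norms.L2Operator ComplexOrder

variable {𝕜 ι : Type*} [RCLike 𝕜]

/-- The vector of those coordinates of `x` whose index satisfies `p`; with `p` membership in `S` or
its negation it pairs with the blocks `B_S`, `B_SN` and `B_N`. -/
def coordRestrict (p : ι → Prop) (x : EuclideanSpace 𝕜 ι) : EuclideanSpace 𝕜 {i // p i} :=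
  toLp 2 fun i => x i

variable [DecidableEq ι] (S : Finset ι)

/-- The vector `x_S` that agrees with `x` on `S` and vanishes elsewhere, of the same length as
`x`. -/
def coordTruncate (x : EuclideanSpace 𝕜 ι) : EuclideanSpace 𝕜 ι :=
  toLp 2 (S.piecewise x.ofLp 0)

theorem coordRestrict_mem_coordTruncate (x : EuclideanSpace 𝕜 ι) :
    coordRestrict (· ∈ S) (coordTruncate S x) = coordRestrict (· ∈ S) x := by
  ext i
  exact S.piecewise_eq_of_mem _ _ i.2

theorem coordRestrict_notMem_coordTruncate (x : EuclideanSpace 𝕜 ι) :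
    coordRestrict (· ∉ S) (coordTruncate S x) = 0 := by
  ext i
  exact S.piecewise_eq_of_notMem _ _ i.2

variable [Fintype ι]

theorem sum_eq_sum_mem_add_sum_notMem {R : Type*} [AddCommMonoid R] (f : ι → R) :
    ∑ i, f i = ∑ i : {i // i ∈ S}, f i + ∑ i : {i // i ∉ S}, f i := by
  rw [← Fintype.sum_subtype_add_sum_subtype (· ∈ S) f]
  congr!

theorem norm_sq_eq_coordRestrict_add_coordRestrict (x : EuclideanSpace 𝕜 ι) :
    ‖x‖ ^ 2 = ‖coordRestrict (· ∈ S) x‖ ^ 2 + ‖coordRestrict (· ∉ S) x‖ ^ 2 := by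
  simp only [EuclideanSpace.norm_sq_eq, sum_eq_sum_mem_add_sum_notMem S, coordRestrict]

theorem norm_coordTruncate (x : EuclideanSpace 𝕜 ι) :
    ‖coordTruncate S x‖ = ‖coordRestrict (· ∈ S) x‖ := by
  rw [← sq_eq_sq₀ (norm_nonneg _) (norm_nonneg _), norm_sq_eq_coordRestrict_add_coordRestrict S,
    coordRestrict_mem_coordTruncate, coordRestrict_notMem_coordTruncate, norm_zero,
    zero_pow two_ne_zero, add_zero]

theorem quadForm_eq_sum_toBlock (M : Matrix ι ι 𝕜) (x : EuclideanSpace 𝕜 ι) :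
    quadForm M x = quadForm (M.toBlock (· ∈ S) (· ∈ S)) (coordRestrict (· ∈ S) x)
      + RCLike.re (star (coordRestrict (· ∈ S) x).ofLp ⬝ᵥ
          M.toBlock (· ∈ S) (· ∉ S) *ᵥ (coordRestrict (· ∉ S) x).ofLp)
      + RCLike.re (star (coordRestrict (· ∉ S) x).ofLp ⬝ᵥ
          M.toBlock (· ∉ S) (· ∈ S) *ᵥ (coordRestrict (· ∈ S) x).ofLp)
      + quadForm (M.toBlock (· ∉ S) (· ∉ S)) (coordRestrict (· ∉ S) x) := by
  simp only [quadForm, dotProduct, mulVec, coordRestrict, toBlock_apply, Pi.star_apply,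
    sum_eq_sum_mem_add_sum_notMem S, mul_add, Finset.sum_add_distrib, map_add]
  ring

theorem quadForm_coordTruncate (M : Matrix ι ι 𝕜) (x : EuclideanSpace 𝕜 ι) :
    quadForm M (coordTruncate S x) =
      quadForm (M.toBlock (· ∈ S) (· ∈ S)) (coordRestrict (· ∈ S) x) := by
  rw [quadForm_eq_sum_toBlock S, coordRestrict_mem_coordTruncate,
    coordRestrict_notMem_coordTruncate, quadForm_zero_right]
  simp

theorem quadForm_le_of_isHermitian {M : Matrix ι ι 𝕜} (hM : M.IsHermitian)
    (x : EuclideanSpace 𝕜 ι) :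
    quadForm M x ≤ ‖M.toBlock (· ∈ S) (· ∈ S)‖ * ‖coordRestrict (· ∈ S) x‖ ^ 2
      + 2 * ‖M.toBlock (· ∈ S) (· ∉ S)‖ * (‖coordRestrict (· ∈ S) x‖ * ‖coordRestrict (· ∉ S) x‖)
      + ‖M.toBlock (· ∉ S) (· ∉ S)‖ * ‖coordRestrict (· ∉ S) x‖ ^ 2 := by
  have hadjoint : ‖M.toBlock (· ∉ S) (· ∈ S)‖ = ‖M.toBlock (· ∈ S) (· ∉ S)‖ := by
    rw [← l2_opNorm_conjTranspose]
    congr 1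
    ext i j
    exact hM.apply i.1 j.1
  have hSS := (abs_le.1 (abs_quadForm_le (M.toBlock (· ∈ S) (· ∈ S)) (coordRestrict _ x))).2
  have hNN := (abs_le.1 (abs_quadForm_le (M.toBlock (· ∉ S) (· ∉ S)) (coordRestrict _ x))).2
  have hSN := (RCLike.re_le_norm _).trans (norm_star_dotProduct_mulVec_le
    (M.toBlock (· ∈ S) (· ∉ S)) (coordRestrict _ x) (coordRestrict _ x))
  have hNS := (RCLike.re_le_norm _).trans (norm_star_dotProduct_mulVec_le
    (M.toBlock (· ∉ S) (· ∈ S)) (coordRestrict _ x) (coordRestrict _ x))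
  rw [hadjoint] at hNS
  rw [quadForm_eq_sum_toBlock S]
  linarith

variable {S} {A : Matrix ι ι 𝕜} (hsupp : ∀ i j, ¬(i ∈ S ∧ j ∈ S) → A i j = 0)
include hsupp

theorem quadForm_coordTruncate_of_support (x : EuclideanSpace 𝕜 ι) :
    quadForm A (coordTruncate S x) = quadForm A x := by
  simp only [quadForm, dotProduct, mulVec, Finset.mul_sum, map_sum]
  refine Finset.sum_congr rfl fun i _ => Finset.sum_congr rfl fun j _ => ?_
  by_cases hij : i ∈ S ∧ j ∈ S
  · simp [coordTruncate, hij]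
  · simp [hsupp i j hij]

theorem quadForm_le_of_support (x : EuclideanSpace 𝕜 ι) :
    quadForm A x ≤ ‖A‖ * ‖coordRestrict (· ∈ S) x‖ ^ 2 := by
  rw [← quadForm_coordTruncate_of_support hsupp, ← norm_coordTruncate]
  exact (abs_le.1 (abs_quadForm_le A _)).2

theorem norm_sub_norm_toBlock_le (hA : A.IsHermitian) (hnonneg : ∀ i j, 0 ≤ A i j) (hA₀ : A ≠ 0)
    {B : Matrix ι ι 𝕜} {c : ℝ} (hc : ∀ x, quadForm (B + A) x ≤ c * ‖x‖ ^ 2) :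
    ‖A‖ - ‖B.toBlock (· ∈ S) (· ∈ S)‖ ≤ c := by
  have : Nonempty ι := not_isEmpty_iff.1 fun _ => hA₀ (Subsingleton.elim A 0)
  obtain ⟨x, hx, hAx⟩ := exists_quadForm_eq_norm hA hnonneg
  set y := coordRestrict (· ∈ S) x
  have hB : -(‖B.toBlock (· ∈ S) (· ∈ S)‖ * ‖y‖ ^ 2) ≤ quadForm B (coordTruncate S x) := by
    rw [quadForm_coordTruncate]
    exact (abs_le.1 (abs_quadForm_le _ y)).1
  have hAB : quadForm B (coordTruncate S x) + ‖A‖ ≤ c * ‖y‖ ^ 2 := by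
    have := hc (coordTruncate S x)
    rwa [quadForm_add_left, quadForm_coordTruncate_of_support hsupp, hAx,
      norm_coordTruncate] at this
  have hy_le : ‖y‖ ^ 2 ≤ 1 := by
    have := norm_sq_eq_coordRestrict_add_coordRestrict S x
    rw [hx] at this
    linarith [sq_nonneg ‖coordRestrict (· ∉ S) x‖]
  have hy_pos : 0 < ‖y‖ ^ 2 := by
    have := quadForm_le_of_support hsupp x
    rw [hAx] at this
    exact pos_of_mul_pos_right ((norm_pos_iff.2 hA₀).trans_le this) (norm_nonneg A)
  have hscale : ‖A‖ * ‖y‖ ^ 2 ≤ ‖A‖ := mul_le_of_le_one_right (norm_nonneg A) hy_le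
  refine le_of_mul_le_mul_right ?_ hy_pos
  linarith

end Blocks

open Matrix WithLp Matrix.Norms.L2Operator ComplexOrder in
theorem stmt3_general {𝕜 ι : Type*} [RCLike 𝕜] [Fintype ι] [DecidableEq ι] (S : Finset ι)
    {B A : Matrix ι ι 𝕜} (hB : B.IsHermitian) (hA : A.IsHermitian) (hnonneg : ∀ i j, 0 ≤ A i j)
    (hsupp : ∀ i j, ¬(i ∈ S ∧ j ∈ S) → A i j = 0)
    (hgap : ‖B.toBlock (· ∉ S) (· ∉ S)‖ + ‖B.toBlock (· ∈ S) (· ∈ S)‖ < ‖A‖)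
    {lam : ℝ} {u : ι → 𝕜} (heig : (B + A) *ᵥ u = lam • u)
    (hmax : ∀ (μ : ℝ) (v : ι → 𝕜), v ≠ 0 → (B + A) *ᵥ v = μ • v → μ ≤ lam)
    (hunit : ∑ i, ‖u i‖ ^ 2 = 1) :
    lowerRoot (‖A‖ + ‖B.toBlock (· ∈ S) (· ∈ S)‖ - ‖B.toBlock (· ∉ S) (· ∉ S)‖)
      (2 * ‖B.toBlock (· ∈ S) (· ∉ S)‖)
      (‖B.toBlock (· ∉ S) (· ∉ S)‖ + ‖B.toBlock (· ∈ S) (· ∈ S)‖ - ‖A‖)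
      ≤ ∑ i ∈ S, ‖u i‖ ^ 2 := by
  have hnormS := norm_nonneg (B.toBlock (· ∈ S) (· ∈ S))
  have hnormN := norm_nonneg (B.toBlock (· ∉ S) (· ∉ S))
  have hA₀ : A ≠ 0 := norm_pos_iff.1 (by linarith)
  have hupper : ∀ x, quadForm (B + A) x ≤ lam * ‖x‖ ^ 2 :=
    quadForm_le_of_eigenvalues_le (hB.add hA) fun i =>
      hmax _ _ ((ofLp_eq_zero 2).not.2 ((hB.add hA).eigenvectorBasis.orthonormal.ne_zero i))
        ((hB.add hA).mulVec_eigenvectorBasis i)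
  have hlower := norm_sub_norm_toBlock_le hsupp hA hnonneg hA₀ hupper
  have hu : ‖toLp 2 u‖ ^ 2 = 1 := (EuclideanSpace.norm_sq_eq _).trans hunit
  have hsplit := norm_sq_eq_coordRestrict_add_coordRestrict S (toLp 2 u)
  have hlam : quadForm (B + A) (toLp 2 u) = lam := by
    rw [quadForm_eq_of_mulVec_eq_smul heig, hu, mul_one]
  rw [quadForm_add_left] at hlam
  have hBu := quadForm_le_of_isHermitian S hB (toLp 2 u)
  have hAu := quadForm_le_of_support hsupp (toLp 2 u)
  have hδ : ‖coordRestrict (· ∈ S) (toLp 2 u)‖ ^ 2 = ∑ i ∈ S, ‖u i‖ ^ 2 :=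
    (EuclideanSpace.norm_sq_eq _).trans (S.sum_coe_sort fun i => ‖u i‖ ^ 2)
  rw [hu] at hsplit
  rw [← hδ]
  refine lowerRoot_le_sq (by linarith) (by linarith) (by linarith) hsplit.symm ?_
  linear_combination hlower + hBu + hAu - hlam - ‖B.toBlock (· ∉ S) (· ∉ S)‖ * hsplit

theorem sum_sq_eq_sum_mem_sq_of_support {ι R : Type*} [Fintype ι] [Semiring R] {S : Finset ι}
    {v w : ι → R} (hzero : ∀ i, i ∉ S → w i = 0) (heq : ∀ i, i ∈ S → w i = v i) :
    ∑ i, w i ^ 2 = ∑ i ∈ S, v i ^ 2 := by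
  rw [← Finset.sum_subset S.subset_univ fun i _ hi => by rw [hzero i hi, zero_pow two_ne_zero]]
  exact Finset.sum_congr rfl fun i hi => by rw [heq i hi]

/-- Let B be symmetric and Â symmetric with nonnegative entries supported
on S×S, with ‖Â‖ > ‖B_N‖ + ‖B_S‖. Let λ be the largest eigenvalue of B + Â with unit
eigenvector u, let u_S agree with u on S and vanish elsewhere, δ = ‖u_S‖₂², and set
α = ‖Â‖ + ‖B_S‖ − ‖B_N‖, β = 2‖B_{SN}‖, γ = ‖B_N‖ + ‖B_S‖ − ‖Â‖. Then
δ ≥ ( β² − 2αγ − √( β⁴ − 4β²γ(α+γ) ) ) / ( 2(α² + β²) ). -/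
theorem stmt3 (n : ℕ) (hn : 0 < n) (S : Finset (Fin n))
    (B Ahat : Matrix (Fin n) (Fin n) ℝ) (hB : B.IsSymm) (hA : Ahat.IsSymm)
    (hnonneg : ∀ i j, 0 ≤ Ahat i j)
    (hsupp : ∀ i j, ¬(i ∈ S ∧ j ∈ S) → Ahat i j = 0)
    (hgap : specNorm Ahat > specNorm (blockN S B) + specNorm (blockS S B))
    (lam : ℝ) (u uS : Fin n → ℝ)
    (heig : (B + Ahat).mulVec u = lam • u)
    (hmax : ∀ (μ : ℝ) (v : Fin n → ℝ), v ≠ 0 → (B + Ahat).mulVec v = μ • v → μ ≤ lam)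
    (hunit : ∑ i, u i ^ 2 = 1)
    (huS : ∀ i, i ∉ S → uS i = 0) (huSe : ∀ i, i ∈ S → uS i = u i)
    (δ : ℝ) (hδ : δ = ∑ i, uS i ^ 2)
    (α β γ : ℝ)
    (hα : α = specNorm Ahat + specNorm (blockS S B) - specNorm (blockN S B))
    (hβ : β = 2 * specNorm (blockSN S B))
    (hγ : γ = specNorm (blockN S B) + specNorm (blockS S B) - specNorm Ahat) :
    δ ≥ (β ^ 2 - 2 * α * γ - Real.sqrt (β ^ 4 - 4 * β ^ 2 * γ * (α + γ))) /
      (2 * (α ^ 2 + β ^ 2)) := by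
  rw [hδ, sum_sq_eq_sum_mem_sq_of_support huS huSe, hα, hβ, hγ]
  simp only [← sq_abs (u _), ← Real.norm_eq_abs] at hunit ⊢
  exact stmt3_general S (Matrix.isHermitian_iff_isSymm.2 hB) (Matrix.isHermitian_iff_isSymm.2 hA)
    hnonneg hsupp hgap heig hmax hunit
end

section
/- Let α, β, γ, δ be real numbers with β ≥ 0, −α ≤ γ < 0, and 0 ≤ δ ≤ 1. If αδ + β√(δ(1−δ)) + γ ≥ 0, then δ ≥ ( β² − 2αγ − √( β⁴ − 4β²γ(α+γ) ) ) / ( 2(α² + β²) ). -/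
/-!
Squaring turns `α x + β √(x (1 - x)) + γ = 0` into `(α x + γ) ^ 2 = β ^ 2 * (x * (1 - x))`, a
quadratic equation in `x` with leading coefficient `α ^ 2 + β ^ 2 > 0` whose lower root is the
claimed bound. So it suffices to find a point `x ≤ δ` at which the left side is at most the right
side. If `α δ + γ ≤ 0`, then squaring the hypothesis shows that `δ` itself is such a point.
Otherwise the line `α x + γ` vanishes at a point of `[0, δ]`, and there the left side is `0`.
-/

theorem neg_sub_sqrt_discrim_div_le {a b c x : ℝ} (ha : 0 < a)
    (hx : a * (x * x) + b * x + c ≤ 0) :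
    (-b - √(discrim a b c)) / (2 * a) ≤ x := by
  have hsq : (-b - 2 * a * x) ^ 2 ≤ discrim a b c := by
    calc (-b - 2 * a * x) ^ 2
        = discrim a b c + 4 * a * (a * (x * x) + b * x + c) := by rw [discrim]; ring
      _ ≤ discrim a b c :=
        add_le_of_nonpos_right (mul_nonpos_of_nonneg_of_nonpos (by positivity) hx)
  rw [div_le_iff₀ (by positivity)]
  linarith [Real.le_sqrt_of_sq_le hsq]

theorem sub_sqrt_div_le_of_sq_le_mul {α β γ x : ℝ} (hαβ : 0 < α ^ 2 + β ^ 2)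
    (hx : (α * x + γ) ^ 2 ≤ β ^ 2 * (x * (1 - x))) :
    (β ^ 2 - 2 * α * γ - √(β ^ 4 - 4 * β ^ 2 * γ * (α + γ))) / (2 * (α ^ 2 + β ^ 2)) ≤ x := by
  have hdiscrim : discrim (α ^ 2 + β ^ 2) (2 * α * γ - β ^ 2) (γ ^ 2) =
      β ^ 4 - 4 * β ^ 2 * γ * (α + γ) := by
    rw [discrim]; ring
  have hquad : (α ^ 2 + β ^ 2) * (x * x) + (2 * α * γ - β ^ 2) * x + γ ^ 2 ≤ 0 := by
    linarith
  simpa only [hdiscrim, neg_sub] using neg_sub_sqrt_discrim_div_le hαβ hquad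

theorem sq_le_mul_of_add_mul_sqrt_nonneg {β s t : ℝ} (hs : 0 ≤ s) (ht : t ≤ 0)
    (h : 0 ≤ t + β * √s) : t ^ 2 ≤ β ^ 2 * s := by
  calc t ^ 2 ≤ (β * √s) ^ 2 := sq_le_sq' (by linarith) (by linarith)
    _ = β ^ 2 * s := by rw [mul_pow, Real.sq_sqrt hs]

theorem exists_le_sq_le_mul_of_nonneg {α β γ δ : ℝ} (hγ : γ ≤ 0) (hδ0 : 0 ≤ δ) (hδ1 : δ ≤ 1)
    (h : 0 ≤ α * δ + β * √(δ * (1 - δ)) + γ) :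
    ∃ x ≤ δ, (α * x + γ) ^ 2 ≤ β ^ 2 * (x * (1 - x)) := by
  rcases le_or_gt (α * δ + γ) 0 with hline | hline
  · have hs : 0 ≤ δ * (1 - δ) := mul_nonneg hδ0 (sub_nonneg.2 hδ1)
    exact ⟨δ, le_rfl, sq_le_mul_of_add_mul_sqrt_nonneg hs hline (by linarith)⟩
  · have hα : 0 < α := pos_of_mul_pos_left (by linarith) hδ0
    have hzero_nonneg : 0 ≤ -γ / α := div_nonneg (neg_nonneg.2 hγ) hα.le
    have hzero_le : -γ / α ≤ δ := (div_le_iff₀' hα).2 (by linarith)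
    refine ⟨-γ / α, hzero_le, ?_⟩
    calc (α * (-γ / α) + γ) ^ 2 = 0 := by rw [mul_div_cancel₀ _ hα.ne']; ring
      _ ≤ β ^ 2 * (-γ / α * (1 - -γ / α)) :=
        mul_nonneg (sq_nonneg β) (mul_nonneg hzero_nonneg (sub_nonneg.2 (hzero_le.trans hδ1)))

theorem stmt6_general {α β γ δ : ℝ} (hγ : γ < 0) (hδ0 : 0 ≤ δ) (hδ1 : δ ≤ 1)
    (h : 0 ≤ α * δ + β * √(δ * (1 - δ)) + γ) :
    (β ^ 2 - 2 * α * γ - √(β ^ 4 - 4 * β ^ 2 * γ * (α + γ))) / (2 * (α ^ 2 + β ^ 2)) ≤ δ := by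
  have hne : α ≠ 0 ∨ β ≠ 0 := by
    by_contra! hzero
    simp only [hzero.1, hzero.2, zero_mul, zero_add] at h
    exact hγ.not_ge h
  have hαβ : 0 < α ^ 2 + β ^ 2 := by rcases hne with hα | hβ <;> positivity
  obtain ⟨x, hxδ, hx⟩ := exists_le_sq_le_mul_of_nonneg hγ.le hδ0 hδ1 h
  exact (sub_sqrt_div_le_of_sq_le_mul hαβ hx).trans hxδ

/-- Let α, β, γ, δ be real numbers with β ≥ 0, −α ≤ γ < 0, and 0 ≤ δ ≤ 1.
If αδ + β√(δ(1−δ)) + γ ≥ 0, then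
δ ≥ ( β² − 2αγ − √( β⁴ − 4β²γ(α+γ) ) ) / ( 2(α² + β²) ). -/
theorem stmt6 (α β γ δ : ℝ) (hβ : 0 ≤ β) (hαγ : -α ≤ γ) (hγ : γ < 0)
    (hδ0 : 0 ≤ δ) (hδ1 : δ ≤ 1)
    (h : α * δ + β * Real.sqrt (δ * (1 - δ)) + γ ≥ 0) :
    δ ≥ (β ^ 2 - 2 * α * γ - Real.sqrt (β ^ 4 - 4 * β ^ 2 * γ * (α + γ))) /
      (2 * (α ^ 2 + β ^ 2)) :=
  stmt6_general hγ hδ0 hδ1 h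
end

section
/- Let n be a positive integer and S ⊆ Fin n. Let B be a symmetric real n×n matrix, and let Â be a symmetric real n×n matrix with nonnegative entries such that Â_{ij} = 0 unless both i ∈ S and j ∈ S. Let u be a unit (ℓ²-norm one) eigenvector of B + Â for its largest eigenvalue, write u = u_S + u_B where u_S agrees with u on coordinates in S and is zero elsewhere, and set δ = ‖u_S‖₂². Then ‖Â‖ − ‖B_S‖ ≤ δ(‖Â‖ + ‖B_S‖) + 2√(δ(1−δ))·‖B_{SN}‖ + (1−δ)‖B_N‖. -/
/-! The largest eigenvalue `lam` of `B + A` bounds the quadratic form of `B + A`, and equals its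
value at `u`. As `A` is nonnegative, its quadratic form at `x` is dominated by the one at `|x|` cut
off outside `S`, where `B` acts only through `B_S`; hence `‖A‖ ≤ r + ‖B_S‖` for any `r ≥ 0` with
`lam ≤ r`. Expanding the quadratic form at `u = u_S + u_N` block by block produces such an `r`. -/

section Support

open Matrix

variable {R m n m' n' : Type*} [NonUnitalNonAssocSemiring R]
  [Fintype m] [Fintype n] [Fintype m'] [Fintype n']

theorem dotProduct_submatrix_mulVec_comp (M : Matrix m n R) {f : m' → m} {g : n' → n}
    (hf : f.Injective) (hg : g.Injective) {x : m → R} {y : n → R}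
    (hx : ∀ i ∉ Set.range f, x i = 0) (hy : ∀ j ∉ Set.range g, y j = 0) :
    (x ∘ f) ⬝ᵥ M.submatrix f g *ᵥ (y ∘ g) = x ⬝ᵥ M *ᵥ y := by
  refine Fintype.sum_of_injective f hf _ _ (fun i hi ↦ by simp [hx i hi]) fun i ↦ ?_
  congr 1
  exact Fintype.sum_of_injective g hg _ _ (fun j hj ↦ by simp [hy j hj]) fun _ ↦ rfl

theorem dotProduct_mulVec_congr_of_support {M : Matrix m n R} {s : Set m} {t : Set n}
    (hM : ∀ i j, ¬(i ∈ s ∧ j ∈ t) → M i j = 0) {x x' : m → R} {y y' : n → R}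
    (hx : s.EqOn x x') (hy : t.EqOn y y') : x ⬝ᵥ M *ᵥ y = x' ⬝ᵥ M *ᵥ y' := by
  simp only [dotProduct, mulVec, Finset.mul_sum]
  refine Finset.sum_congr rfl fun i _ ↦ Finset.sum_congr rfl fun j _ ↦ ?_
  by_cases hij : i ∈ s ∧ j ∈ t
  · rw [hx hij.1, hy hij.2]
  · simp [hM i j hij]

end Support

section EuclideanNorm

open WithLp

variable {𝕜 m n : Type*} [RCLike 𝕜] [Fintype m] [Fintype n]

theorem norm_toLp_comp_of_injective {f : m → n} (hf : f.Injective) {x : n → 𝕜}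
    (hx : ∀ i ∉ Set.range f, x i = 0) : ‖toLp 2 (x ∘ f)‖ = ‖toLp 2 x‖ := by
  simp only [EuclideanSpace.norm_eq]
  congr 1
  exact Fintype.sum_of_injective f hf _ _ (fun i hi ↦ by simp [hx i hi]) fun _ ↦ rfl

theorem norm_toLp_add_sq_of_disjoint_support {x y : n → 𝕜} (h : ∀ i, x i = 0 ∨ y i = 0) :
    ‖toLp 2 (x + y)‖ ^ 2 = ‖toLp 2 x‖ ^ 2 + ‖toLp 2 y‖ ^ 2 := by
  simp only [EuclideanSpace.norm_sq_eq, ← Finset.sum_add_distrib]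
  refine Finset.sum_congr rfl fun i _ ↦ ?_
  rcases h i with hi | hi <;> simp [hi]

end EuclideanNorm

section QuadraticForm

open Matrix RCLike WithLp
open scoped ComplexOrder MatrixOrder Matrix.Norms.L2Operator

variable {𝕜 m n : Type*} [RCLike 𝕜] [Fintype m] [Fintype n]

theorem norm_dotProduct_mulVec_le_of_nonneg {M : Matrix m n 𝕜} (hM : ∀ i j, 0 ≤ M i j)
    (x : m → 𝕜) (y : n → 𝕜) :
    ‖star x ⬝ᵥ M *ᵥ y‖ ≤ re ((fun i ↦ (‖x i‖ : 𝕜)) ⬝ᵥ M *ᵥ fun j ↦ (‖y j‖ : 𝕜)) := by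
  simp only [dotProduct, mulVec, Finset.mul_sum, map_sum]
  refine (norm_sum_le _ _).trans (Finset.sum_le_sum fun i _ ↦ ?_)
  refine (norm_sum_le _ _).trans (Finset.sum_le_sum fun j _ ↦ ?_)
  rw [← norm_of_nonneg' (hM i j), norm_mul, norm_mul, Pi.star_apply, norm_star]
  simp only [← ofReal_mul, ofReal_re, norm_ofReal, abs_norm, le_refl]

theorem re_dotProduct_mulVec_of_mulVec_eq_smul {M : Matrix n n 𝕜} {μ : ℝ} {u : n → 𝕜}
    (h : M *ᵥ u = μ • u) : re (star u ⬝ᵥ M *ᵥ u) = μ * ‖toLp 2 u‖ ^ 2 := by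
  rw [h, dotProduct_smul, smul_re, dotProduct_comm, ← EuclideanSpace.inner_toLp_toLp,
    inner_self_eq_norm_sq]

theorem norm_dotProduct_mulVec_le [DecidableEq n] (M : Matrix m n 𝕜) (x : m → 𝕜)
    (y : n → 𝕜) : ‖star x ⬝ᵥ M *ᵥ y‖ ≤ ‖M‖ * (‖toLp 2 x‖ * ‖toLp 2 y‖) := by
  calc ‖star x ⬝ᵥ M *ᵥ y‖ = ‖inner 𝕜 (toLp 2 x) (toLp 2 (M *ᵥ y))‖ := by
        rw [EuclideanSpace.inner_toLp_toLp, dotProduct_comm]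
    _ ≤ ‖toLp 2 x‖ * ‖toLp 2 (M *ᵥ y)‖ := norm_inner_le_norm _ _
    _ ≤ ‖toLp 2 x‖ * (‖M‖ * ‖toLp 2 y‖) := by gcongr; exact M.l2_opNorm_mulVec (toLp 2 y)
    _ = ‖M‖ * (‖toLp 2 x‖ * ‖toLp 2 y‖) := by ring

theorem norm_dotProduct_mulVec_le_submatrix {m' n' : Type*} [Fintype m'] [Fintype n']
    [DecidableEq n'] (M : Matrix m n 𝕜) {f : m' → m} {g : n' → n}
    (hf : f.Injective) (hg : g.Injective) {x : m → 𝕜} {y : n → 𝕜}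
    (hx : ∀ i ∉ Set.range f, x i = 0) (hy : ∀ j ∉ Set.range g, y j = 0) :
    ‖star x ⬝ᵥ M *ᵥ y‖ ≤ ‖M.submatrix f g‖ * (‖toLp 2 x‖ * ‖toLp 2 y‖) := by
  have hx' : ∀ i ∉ Set.range f, star x i = 0 := fun i hi ↦ by simp [hx i hi]
  rw [← dotProduct_submatrix_mulVec_comp M hf hg hx' hy, ← norm_toLp_comp_of_injective hf hx,
    ← norm_toLp_comp_of_injective hg hy]
  exact norm_dotProduct_mulVec_le (M.submatrix f g) (x ∘ f) (y ∘ g)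

theorem l2_opNorm_le_of_abs_re_dotProduct_mulVec_le [DecidableEq n] {M : Matrix n n 𝕜}
    (hM : M.IsHermitian) {c : ℝ} (hc : 0 ≤ c)
    (h : ∀ x, |re (star x ⬝ᵥ M *ᵥ x)| ≤ c * ‖toLp 2 x‖ ^ 2) : ‖M‖ ≤ c := by
  have hT : (toEuclideanCLM (n := n) (𝕜 := 𝕜) M).IsSymmetric :=
    isSymmetric_toEuclideanLin_iff.mpr hM
  rw [cstar_norm_def, ContinuousLinearMap.norm_eq_iSup_rayleighQuotient _ hT]
  refine Real.iSup_le (fun x ↦ ?_) hc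
  have hx : (toEuclideanCLM (n := n) (𝕜 := 𝕜) M).reApplyInnerSelf x =
      re (star x.ofLp ⬝ᵥ M *ᵥ x.ofLp) := by
    rw [ContinuousLinearMap.reApplyInnerSelf_apply, inner_re_symm,
      EuclideanSpace.inner_eq_star_dotProduct, ofLp_toEuclideanCLM, dotProduct_comm]
  rw [ContinuousLinearMap.rayleighQuotient, abs_div, abs_sq, hx]
  exact div_le_of_le_mul₀ (sq_nonneg _) hc (h x.ofLp)

theorem re_dotProduct_mulVec_le_of_eigenvalues_le {M : Matrix n n 𝕜} (hM : M.IsHermitian)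
    {c : ℝ} (hc : ∀ (μ : ℝ) (v : n → 𝕜), v ≠ 0 → M *ᵥ v = μ • v → μ ≤ c) (x : n → 𝕜) :
    re (star x ⬝ᵥ M *ᵥ x) ≤ c * ‖toLp 2 x‖ ^ 2 := by
  classical
  have hle : M ≤ algebraMap ℝ _ c := by
    refine le_algebraMap_of_spectrum_le (fun μ hμ ↦ ?_) hM
    rw [hM.spectrum_real_eq_range_eigenvalues] at hμ
    obtain ⟨i, rfl⟩ := hμ
    refine hc _ _ (fun h0 ↦ ?_) (hM.mulVec_eigenvectorBasis i)
    exact hM.eigenvectorBasis.orthonormal.ne_zero i (by ext j; simp [h0])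
  have hpos := (Matrix.le_iff.mp hle).re_dotProduct_nonneg x
  have hscalar : (algebraMap ℝ (Matrix n n 𝕜) c) *ᵥ x = c • x := by
    rw [Algebra.algebraMap_eq_smul_one, smul_mulVec, one_mulVec]
  rw [sub_mulVec, dotProduct_sub, map_sub, re_dotProduct_mulVec_of_mulVec_eq_smul hscalar] at hpos
  exact sub_nonneg.mp hpos

end QuadraticForm

section Compression

open Matrix RCLike WithLp
open scoped ComplexOrder Matrix.Norms.L2Operator

variable {𝕜 n k l : Type*} [RCLike 𝕜] [Fintype n] [Fintype k] [DecidableEq k]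

theorem re_dotProduct_mulVec_add_le_submatrix [Fintype l] [DecidableEq l] {B : Matrix n n 𝕜}
    (hB : B.IsHermitian) {f : k → n} {g : l → n} (hf : f.Injective) (hg : g.Injective)
    {v w : n → 𝕜} (hv : ∀ i ∉ Set.range f, v i = 0) (hw : ∀ i ∉ Set.range g, w i = 0) :
    re (star (v + w) ⬝ᵥ B *ᵥ (v + w)) ≤
      ‖B.submatrix f f‖ * ‖toLp 2 v‖ ^ 2 +
        2 * (‖B.submatrix f g‖ * (‖toLp 2 v‖ * ‖toLp 2 w‖)) +
        ‖B.submatrix g g‖ * ‖toLp 2 w‖ ^ 2 := by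
  have hsymm : re (star w ⬝ᵥ B *ᵥ v) = re (star v ⬝ᵥ B *ᵥ w) := by
    rw [star_dotProduct, star_def, conj_re, star_mulVec, hB.eq, ← dotProduct_mulVec]
  have hvv := (re_le_norm _).trans (norm_dotProduct_mulVec_le_submatrix B hf hf hv hv)
  have hvw := (re_le_norm _).trans (norm_dotProduct_mulVec_le_submatrix B hf hg hv hw)
  have hww := (re_le_norm _).trans (norm_dotProduct_mulVec_le_submatrix B hg hg hw hw)
  simp only [star_add, mulVec_add, dotProduct_add, add_dotProduct, map_add, hsymm]
  linarith

theorem re_dotProduct_mulVec_add_le_of_support [DecidableEq n] {A : Matrix n n 𝕜} {s : Set n}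
    (hA : ∀ i j, ¬(i ∈ s ∧ j ∈ s) → A i j = 0) (v : n → 𝕜) {w : n → 𝕜}
    (hw : ∀ i ∈ s, w i = 0) :
    re (star (v + w) ⬝ᵥ A *ᵥ (v + w)) ≤ ‖A‖ * ‖toLp 2 v‖ ^ 2 := by
  have hv : s.EqOn (v + w) v := fun i hi ↦ by simp [hw i hi]
  have hv' : s.EqOn (star (v + w)) (star v) := fun i hi ↦ congrArg star (hv hi)
  rw [dotProduct_mulVec_congr_of_support hA hv' hv, sq]
  exact (re_le_norm _).trans (norm_dotProduct_mulVec_le A v v)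

theorem l2_opNorm_le_add_l2_opNorm_submatrix [DecidableEq n] {A B : Matrix n n 𝕜}
    (hA : A.IsHermitian) (hnonneg : ∀ i j, 0 ≤ A i j) {f : k → n} (hf : f.Injective)
    (hsupp : ∀ i j, ¬(i ∈ Set.range f ∧ j ∈ Set.range f) → A i j = 0) {r : ℝ} (hr : 0 ≤ r)
    (hform : ∀ x, re (star x ⬝ᵥ (B + A) *ᵥ x) ≤ r * ‖toLp 2 x‖ ^ 2) :
    ‖A‖ ≤ r + ‖B.submatrix f f‖ := by
  refine l2_opNorm_le_of_abs_re_dotProduct_mulVec_le hA (by positivity) fun x ↦ ?_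
  set z : n → 𝕜 := (Set.range f).indicator fun i ↦ (‖x i‖ : 𝕜) with hz
  have hz_eq : (Set.range f).EqOn (fun i ↦ (‖x i‖ : 𝕜)) z := Set.eqOn_indicator.symm
  have hz_star : star z = z := by
    ext i
    by_cases hi : i ∈ Set.range f <;> simp [hz, hi]
  have hz_norm : ‖toLp 2 z‖ ≤ ‖toLp 2 x‖ := by
    simp only [EuclideanSpace.norm_eq]
    gcongr with i
    simpa using norm_indicator_le_norm_self (fun i ↦ (‖x i‖ : 𝕜)) i
  have hBz := norm_dotProduct_mulVec_le_submatrix B hf hf (x := z) (y := z)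
    (fun _ hi ↦ Set.indicator_of_notMem hi _) (fun _ hi ↦ Set.indicator_of_notMem hi _)
  calc |re (star x ⬝ᵥ A *ᵥ x)| ≤ ‖star x ⬝ᵥ A *ᵥ x‖ := abs_re_le_norm _
    _ ≤ re (star z ⬝ᵥ A *ᵥ z) := by
      rw [hz_star, ← dotProduct_mulVec_congr_of_support hsupp hz_eq hz_eq]
      exact norm_dotProduct_mulVec_le_of_nonneg hnonneg x x
    _ = re (star z ⬝ᵥ (B + A) *ᵥ z) - re (star z ⬝ᵥ B *ᵥ z) := by
      rw [add_mulVec, dotProduct_add, map_add, add_sub_cancel_left]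
    _ ≤ (r + ‖B.submatrix f f‖) * ‖toLp 2 z‖ ^ 2 := by
      linarith [hform z, (abs_le.mp ((abs_re_le_norm _).trans hBz)).1]
    _ ≤ (r + ‖B.submatrix f f‖) * ‖toLp 2 x‖ ^ 2 := by gcongr

theorem stmt7_general [DecidableEq n] (S : Finset n) {B A : Matrix n n 𝕜} (hB : B.IsHermitian)
    (hA : A.IsHermitian) (hnonneg : ∀ i j, 0 ≤ A i j)
    (hsupp : ∀ i j, ¬(i ∈ S ∧ j ∈ S) → A i j = 0) {lam : ℝ} {u uS uN : n → 𝕜}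
    (heig : (B + A) *ᵥ u = lam • u)
    (hmax : ∀ (μ : ℝ) (v : n → 𝕜), v ≠ 0 → (B + A) *ᵥ v = μ • v → μ ≤ lam)
    (hunit : ‖toLp 2 u‖ = 1) (hdecomp : u = uS + uN)
    (huS : ∀ i ∉ S, uS i = 0) (huN : ∀ i ∈ S, uN i = 0) {δ : ℝ} (hδ : δ = ‖toLp 2 uS‖ ^ 2) :
    ‖A‖ - ‖B.toBlock (· ∈ S) (· ∈ S)‖ ≤
      δ * (‖A‖ + ‖B.toBlock (· ∈ S) (· ∈ S)‖) +
        2 * √(δ * (1 - δ)) * ‖B.toBlock (· ∈ S) (· ∉ S)‖ +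
        (1 - δ) * ‖B.toBlock (· ∉ S) (· ∉ S)‖ := by
  have hδN : 1 - δ = ‖toLp 2 uN‖ ^ 2 := by
    have := norm_toLp_add_sq_of_disjoint_support (x := uS) (y := uN) fun i ↦
      (em (i ∈ S)).symm.imp (huS i) (huN i)
    rw [← hdecomp, hunit] at this
    linarith
  have hcross : √(δ * (1 - δ)) = ‖toLp 2 uS‖ * ‖toLp 2 uN‖ := by
    rw [hδN, hδ, ← mul_pow, Real.sqrt_sq (by positivity)]
  have hlam : re (star u ⬝ᵥ (B + A) *ᵥ u) = lam := by
    rw [re_dotProduct_mulVec_of_mulVec_eq_smul heig, hunit, one_pow, mul_one]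
  have hBu := re_dotProduct_mulVec_add_le_submatrix hB
    (Subtype.val_injective (p := (· ∈ S))) (Subtype.val_injective (p := (· ∉ S)))
    (v := uS) (w := uN) (by simpa using huS) (by simpa using huN)
  have hAu := re_dotProduct_mulVec_add_le_of_support (s := S) hsupp uS huN
  rw [add_mulVec, dotProduct_add, map_add, hdecomp] at hlam
  rw [hcross, hδN, hδ, sub_le_iff_le_add]
  refine l2_opNorm_le_add_l2_opNorm_submatrix hA hnonneg (B := B)
    (Subtype.val_injective (p := (· ∈ S))) (by simpa using hsupp) (by positivity) fun x ↦
    (re_dotProduct_mulVec_le_of_eigenvalues_le (hB.add hA) hmax x).trans ?_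
  gcongr
  simp only [toBlock]
  linarith

end Compression

open scoped Matrix.Norms.L2Operator in
theorem specNorm_eq_l2_opNorm {m n : Type*} [Fintype m] [Fintype n] [DecidableEq n]
    (M : Matrix m n ℝ) : specNorm M = ‖M‖ :=
  rfl

/-- Let B be symmetric, Â symmetric with nonnegative entries supported on
S×S, and u a unit eigenvector of B + Â for its largest eigenvalue, u = u_S + u_B,
δ = ‖u_S‖₂². Then ‖Â‖ − ‖B_S‖ ≤ δ(‖Â‖ + ‖B_S‖) + 2√(δ(1−δ))‖B_{SN}‖ + (1−δ)‖B_N‖. -/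
theorem stmt7 (n : ℕ) (hn : 0 < n) (S : Finset (Fin n))
    (B Ahat : Matrix (Fin n) (Fin n) ℝ) (hB : B.IsSymm) (hA : Ahat.IsSymm)
    (hnonneg : ∀ i j, 0 ≤ Ahat i j)
    (hsupp : ∀ i j, ¬(i ∈ S ∧ j ∈ S) → Ahat i j = 0)
    (lam : ℝ) (u uS uB : Fin n → ℝ)
    (heig : (B + Ahat).mulVec u = lam • u)
    (hmax : ∀ (μ : ℝ) (v : Fin n → ℝ), v ≠ 0 → (B + Ahat).mulVec v = μ • v → μ ≤ lam)
    (hunit : ∑ i, u i ^ 2 = 1)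
    (hdecomp : u = uS + uB)
    (huS : ∀ i, i ∉ S → uS i = 0) (huSe : ∀ i, i ∈ S → uS i = u i)
    (δ : ℝ) (hδ : δ = ∑ i, uS i ^ 2) :
    specNorm Ahat - specNorm (blockS S B) ≤
      δ * (specNorm Ahat + specNorm (blockS S B)) +
        2 * Real.sqrt (δ * (1 - δ)) * specNorm (blockSN S B) +
        (1 - δ) * specNorm (blockN S B) := by
  simp only [specNorm_eq_l2_opNorm]
  exact stmt7_general S (Matrix.isHermitian_iff_isSymm.mpr hB)
    (Matrix.isHermitian_iff_isSymm.mpr hA) hnonneg hsupp heig hmax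
    (by simp [EuclideanSpace.norm_eq, hunit]) hdecomp huS
    (fun i hi ↦ by simpa [huSe i hi] using congrFun hdecomp i)
    (by simp [EuclideanSpace.norm_sq_eq, hδ])
end
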